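/- Fix an integer k ≥ 1. Let U^{(1),k}_0(Ω∞) be the set of functions Ω∞° → ℝ³ of the form u = ( y(1−y)z·q₁, x(1−x)z·q₂, x(1−x)y(1−y)·q₃ ) + (z^{k−1}/(1+z)^{k+1})·( z·∂r/∂x, z·∂r/∂y, −r ), where q₁ ∈ Q^{k−1,k−2,k−2}_{k+1}, q₂ ∈ Q^{k−2,k−1,k−2}_{k+1}, q₃ ∈ Q^{k−2,k−2,k−2}_{k+1}, and r = x(1−x)y(1−y)ρ with ρ ∈ Q^{k−2,k−2}[x,y]. Then every u ∈ U^{(1),k}_0(Ω∞) can be written, uniquely, as u = ∇q + w on Ω∞°, where q = x(1−x)y(1−y)z·v for some v ∈ Q^{k−2,k−2,k−2}_k (i.e. q ∈ U^{(0),k}_0(Ω∞)) and w ∈ U^{(1),k}_{0,curl}(Ω∞). -/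

import Mathlib

noncomputable section

/-- The interior `Ω∞° = (0,1) × (0,1) × (0,∞)` of the infinite pyramid. -/
def PyrInfInt : Set (ℝ × ℝ × ℝ) :=
  {p | 0 < p.1 ∧ p.1 < 1 ∧ 0 < p.2.1 ∧ p.2.1 < 1 ∧ 0 < p.2.2}

/-- The weighted monomial `x^a y^b z^c / (1+z)^k`. -/
def qmon (k a b c : ℕ) : ℝ × ℝ × ℝ → ℝ :=
  fun p => p.1 ^ a * p.2.1 ^ b * p.2.2 ^ c / (1 + p.2.2) ^ k

/-- The space `Q^{l,m,n}_k`. -/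
def Qsp (l m n : ℤ) (k : ℕ) : Submodule ℝ ((ℝ × ℝ × ℝ) → ℝ) :=
  Submodule.span ℝ
    {f | ∃ a b c : ℕ, (a : ℤ) ≤ l ∧ (b : ℤ) ≤ m ∧ (c : ℤ) ≤ n ∧ f = qmon k a b c}

/-- The gradient of a scalar field at a point, as a vector in `ℝ³`. -/
def grad3 (f : ℝ × ℝ × ℝ → ℝ) (p : ℝ × ℝ × ℝ) : ℝ × ℝ × ℝ :=
  (fderiv ℝ f p ((1 : ℝ), (0 : ℝ), (0 : ℝ)),
   fderiv ℝ f p ((0 : ℝ), (1 : ℝ), (0 : ℝ)),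
   fderiv ℝ f p ((0 : ℝ), (0 : ℝ), (1 : ℝ)))

/-- `x(1−x)y(1−y)·ρ` as a polynomial in two variables. -/
def bub2 (ρ : MvPolynomial (Fin 2) ℝ) : MvPolynomial (Fin 2) ℝ :=
  MvPolynomial.X 0 * (1 - MvPolynomial.X 0) * MvPolynomial.X 1 * (1 - MvPolynomial.X 1) * ρ

/-- The special field `(z^{k−1}/(1+z)^{k+1})·(z·∂R/∂x, z·∂R/∂y, −R)`. -/
def specialGrad (k : ℕ) (R : MvPolynomial (Fin 2) ℝ) : ℝ × ℝ × ℝ → ℝ × ℝ × ℝ :=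
  fun p =>
    (p.2.2 ^ (k - 1) / (1 + p.2.2) ^ (k + 1) *
       (p.2.2 * MvPolynomial.eval ![p.1, p.2.1] (MvPolynomial.pderiv 0 R)),
     p.2.2 ^ (k - 1) / (1 + p.2.2) ^ (k + 1) *
       (p.2.2 * MvPolynomial.eval ![p.1, p.2.1] (MvPolynomial.pderiv 1 R)),
     -(p.2.2 ^ (k - 1) / (1 + p.2.2) ^ (k + 1) * MvPolynomial.eval ![p.1, p.2.1] R))

/-- The generic element of `U^{(1),k}_0(Ω∞)` determined by `q₁, q₂, q₃` and `ρ`: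
`(y(1−y)z·q₁, x(1−x)z·q₂, x(1−x)y(1−y)·q₃) + (z^{k−1}/(1+z)^{k+1})·(z·rₓ, z·r_y, −r)`
where `r = x(1−x)y(1−y)ρ`. -/
def U1zeroFun (k : ℕ) (q₁ q₂ q₃ : (ℝ × ℝ × ℝ) → ℝ) (ρ : MvPolynomial (Fin 2) ℝ) :
    ℝ × ℝ × ℝ → ℝ × ℝ × ℝ :=
  fun p =>
    (p.2.1 * (1 - p.2.1) * p.2.2 * q₁ p,
     p.1 * (1 - p.1) * p.2.2 * q₂ p,
     p.1 * (1 - p.1) * p.2.1 * (1 - p.2.1) * q₃ p) + specialGrad k (bub2 ρ) p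

/-- The `H¹` bubble `x(1−x)y(1−y)z·v`. -/
def bubQ (v : (ℝ × ℝ × ℝ) → ℝ) : (ℝ × ℝ × ℝ) → ℝ :=
  fun p => p.1 * (1 - p.1) * p.2.1 * (1 - p.2.1) * p.2.2 * v p

/-- The generic element of `U^{(1),k}_{0,curl}(Ω∞)`. -/
def U1curlFun (k : ℕ) (p₁ p₂ : MvPolynomial (Fin 3) ℝ) (ρ : MvPolynomial (Fin 2) ℝ) :
    ℝ × ℝ × ℝ → ℝ × ℝ × ℝ :=
  fun p =>
    ((p.2.1 * (1 - p.2.1) * p.2.2 * MvPolynomial.eval ![p.1, p.2.1, p.2.2] p₁) /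
        (1 + p.2.2) ^ (k + 1),
     (p.1 * (1 - p.1) * p.2.2 * MvPolynomial.eval ![p.1, p.2.1, p.2.2] p₂) /
        (1 + p.2.2) ^ (k + 1),
     (p.1 * (1 - p.1) * p.2.1 * (1 - p.2.1) * MvPolynomial.eval ![p.1, p.2.1] ρ) /
        (1 + p.2.2) ^ (k + 1))

/-- Degree constraints for `U^{(1),k}_{0,curl}(Ω∞)` (bounds in `ℤ`). -/
def U1curlBounds (k : ℕ) (p₁ p₂ : MvPolynomial (Fin 3) ℝ)
    (ρ : MvPolynomial (Fin 2) ℝ) : Prop :=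
  (∀ d ∈ p₁.support,
    (d 0 : ℤ) ≤ (k : ℤ) - 1 ∧ (d 1 : ℤ) ≤ (k : ℤ) - 2 ∧ (d 2 : ℤ) ≤ (k : ℤ) - 2) ∧
  (∀ d ∈ p₂.support,
    (d 0 : ℤ) ≤ (k : ℤ) - 2 ∧ (d 1 : ℤ) ≤ (k : ℤ) - 1 ∧ (d 2 : ℤ) ≤ (k : ℤ) - 2) ∧
  (∀ d ∈ ρ.support, (d 0 : ℤ) ≤ (k : ℤ) - 2 ∧ (d 1 : ℤ) ≤ (k : ℤ) - 2)

theorem aux_hasFDerivAt (F G H : ℝ → ℝ) (F' G' H' : ℝ) (p : ℝ × ℝ × ℝ)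
    (hF : HasDerivAt F F' p.1) (hG : HasDerivAt G G' p.2.1) (hH : HasDerivAt H H' p.2.2) :
    DifferentiableAt ℝ (fun q : ℝ × ℝ × ℝ => F q.1 * G q.2.1 * H q.2.2) p ∧
    grad3 (fun q : ℝ × ℝ × ℝ => F q.1 * G q.2.1 * H q.2.2) p =
      (F' * G p.2.1 * H p.2.2, F p.1 * G' * H p.2.2, F p.1 * G p.2.1 * H') := by
  have h1 : HasFDerivAt (fun q : ℝ × ℝ × ℝ => F q.1) _ p :=
    HasFDerivAt.comp p hF.hasFDerivAt hasFDerivAt_fst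
  have h2 : HasFDerivAt (fun q : ℝ × ℝ × ℝ => G q.2.1) _ p :=
    HasFDerivAt.comp (f := fun q : ℝ × ℝ × ℝ => q.2.1) p hG.hasFDerivAt
      (HasFDerivAt.comp p hasFDerivAt_fst hasFDerivAt_snd)
  have h3 : HasFDerivAt (fun q : ℝ × ℝ × ℝ => H q.2.2) _ p :=
    HasFDerivAt.comp (f := fun q : ℝ × ℝ × ℝ => q.2.2) p hH.hasFDerivAt
      (HasFDerivAt.comp p hasFDerivAt_snd hasFDerivAt_snd)
  have h := (h1.mul h2).mul h3
  refine ⟨h.differentiableAt, ?_⟩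
  have h' : fderiv ℝ (fun q : ℝ × ℝ × ℝ => F q.1 * G q.2.1 * H q.2.2) p = _ := h.fderiv
  unfold grad3
  rw [h']
  ext <;> simp <;> ring

theorem aux_bub_deriv (a : ℕ) (x : ℝ) :
    HasDerivAt (fun x : ℝ => x * (1 - x) * x ^ a)
      ((a + 1) * x ^ a - (a + 2) * x ^ (a + 1)) x := by
  have h := (hasDerivAt_pow (a + 1) x).sub (hasDerivAt_pow (a + 2) x)
  refine (h.congr_of_eventuallyEq (Filter.Eventually.of_forall fun t => ?_)).congr_deriv ?_
  · simp only [Pi.sub_apply]; ring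
  · push_cast; simp

theorem aux_z_deriv (k c : ℕ) (z : ℝ) (hz : 0 < z) :
    HasDerivAt (fun z : ℝ => z * (z ^ c / (1 + z) ^ k))
      (((c + 1) * z ^ c + (c + 1 - k) * z ^ (c + 1)) / (1 + z) ^ (k + 1)) z := by
  have h1 : (1 + z) ≠ 0 := by positivity
  have h := (hasDerivAt_pow (c + 1) z).div
    (((hasDerivAt_id z).const_add 1).pow k) (pow_ne_zero k h1)
  refine (h.congr_of_eventuallyEq (Filter.Eventually.of_forall fun t => ?_)).congr_deriv ?_
  · simp; ring
  · rcases k with _ | k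
    · simp; field_simp; ring
    · simp
      field_simp
      ring

theorem aux_bub_mon (k a b c : ℕ) (p : ℝ × ℝ × ℝ) (hp : p ∈ PyrInfInt) :
    DifferentiableAt ℝ (bubQ (qmon k a b c)) p ∧
    grad3 (bubQ (qmon k a b c)) p =
      (((a + 1) * p.1 ^ a - (a + 2) * p.1 ^ (a + 1)) * (p.2.1 * (1 - p.2.1) * p.2.1 ^ b)
          * (p.2.2 * (p.2.2 ^ c / (1 + p.2.2) ^ k)),
       (p.1 * (1 - p.1) * p.1 ^ a) * ((b + 1) * p.2.1 ^ b - (b + 2) * p.2.1 ^ (b + 1))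
          * (p.2.2 * (p.2.2 ^ c / (1 + p.2.2) ^ k)),
       (p.1 * (1 - p.1) * p.1 ^ a) * (p.2.1 * (1 - p.2.1) * p.2.1 ^ b)
          * (((c + 1) * p.2.2 ^ c + (c + 1 - k) * p.2.2 ^ (c + 1))
              / (1 + p.2.2) ^ (k + 1))) := by
  have e : bubQ (qmon k a b c) = fun q : ℝ × ℝ × ℝ =>
      (fun x : ℝ => x * (1 - x) * x ^ a) q.1 * (fun x : ℝ => x * (1 - x) * x ^ b) q.2.1 *
        (fun z : ℝ => z * (z ^ c / (1 + z) ^ k)) q.2.2 := by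
    funext q; simp only [bubQ, qmon]; ring
  rw [e]
  exact aux_hasFDerivAt _ _ _ _ _ _ p (aux_bub_deriv a _) (aux_bub_deriv b _)
    (aux_z_deriv k c _ hp.2.2.2.2)

theorem bubQ_add (v w : ℝ × ℝ × ℝ → ℝ) : bubQ (v + w) = bubQ v + bubQ w := by
  funext p; simp [bubQ]; ring

theorem bubQ_smul (r : ℝ) (v : ℝ × ℝ × ℝ → ℝ) : bubQ (r • v) = r • bubQ v := by
  funext p; simp [bubQ]; ring

theorem bubQ_zero : bubQ 0 = 0 := by
  funext p; simp [bubQ]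

theorem aux_diff {l m n : ℤ} {k : ℕ} {v : ℝ × ℝ × ℝ → ℝ} (hv : v ∈ Qsp l m n k)
    (p : ℝ × ℝ × ℝ) (hp : p ∈ PyrInfInt) : DifferentiableAt ℝ (bubQ v) p := by
  unfold Qsp at hv
  induction hv using Submodule.span_induction with
  | mem x h =>
    obtain ⟨a, b, c, -, -, -, rfl⟩ := h
    exact (aux_bub_mon k a b c p hp).1
  | zero => rw [bubQ_zero]; exact differentiableAt_const _
  | add x y _ _ hx hy => rw [bubQ_add]; exact hx.add hy
  | smul r x _ hx => rw [bubQ_smul]; exact hx.const_smul r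

theorem grad3_add (f g : ℝ × ℝ × ℝ → ℝ) (p : ℝ × ℝ × ℝ) (hf : DifferentiableAt ℝ f p)
    (hg : DifferentiableAt ℝ g p) : grad3 (f + g) p = grad3 f p + grad3 g p := by
  simp [grad3, fderiv_add hf hg]

theorem grad3_smul (r : ℝ) (f : ℝ × ℝ × ℝ → ℝ) (p : ℝ × ℝ × ℝ) (hf : DifferentiableAt ℝ f p) :
    grad3 (r • f) p = r • grad3 f p := by
  simp [grad3, fderiv_const_smul hf]

theorem U1curlFun_add (k : ℕ) (p₁ p₂ p₁' p₂' : MvPolynomial (Fin 3) ℝ)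
    (ρ ρ' : MvPolynomial (Fin 2) ℝ) (p : ℝ × ℝ × ℝ) :
    U1curlFun k (p₁ + p₁') (p₂ + p₂') (ρ + ρ') p =
      U1curlFun k p₁ p₂ ρ p + U1curlFun k p₁' p₂' ρ' p := by
  ext <;> simp [U1curlFun] <;> ring

theorem U1curlFun_smul (k : ℕ) (r : ℝ) (p₁ p₂ : MvPolynomial (Fin 3) ℝ)
    (ρ : MvPolynomial (Fin 2) ℝ) (p : ℝ × ℝ × ℝ) :
    U1curlFun k (r • p₁) (r • p₂) (r • ρ) p = r • U1curlFun k p₁ p₂ ρ p := by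
  ext <;> simp [U1curlFun, MvPolynomial.smul_eval] <;> ring

theorem U1curlBounds_add {k : ℕ} {p₁ p₂ p₁' p₂' : MvPolynomial (Fin 3) ℝ}
    {ρ ρ' : MvPolynomial (Fin 2) ℝ} (h : U1curlBounds k p₁ p₂ ρ)
    (h' : U1curlBounds k p₁' p₂' ρ') :
    U1curlBounds k (p₁ + p₁') (p₂ + p₂') (ρ + ρ') := by
  classical
  refine ⟨fun d hd => ?_, fun d hd => ?_, fun d hd => ?_⟩ <;>
    rcases Finset.mem_union.mp (MvPolynomial.support_add hd) with hd | hd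
  · exact h.1 d hd
  · exact h'.1 d hd
  · exact h.2.1 d hd
  · exact h'.2.1 d hd
  · exact h.2.2 d hd
  · exact h'.2.2 d hd

theorem U1curlBounds_smul {k : ℕ} {p₁ p₂ : MvPolynomial (Fin 3) ℝ}
    {ρ : MvPolynomial (Fin 2) ℝ} (r : ℝ) (h : U1curlBounds k p₁ p₂ ρ) :
    U1curlBounds k (r • p₁) (r • p₂) (r • ρ) :=
  ⟨fun d hd => h.1 d (MvPolynomial.support_smul hd),
   fun d hd => h.2.1 d (MvPolynomial.support_smul hd),
   fun d hd => h.2.2 d (MvPolynomial.support_smul hd)⟩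

theorem U1curlBounds_zero (k : ℕ) : U1curlBounds k 0 0 0 := by
  simp [U1curlBounds]

theorem U1curlFun_zero (k : ℕ) (p : ℝ × ℝ × ℝ) : U1curlFun k 0 0 0 p = 0 := by
  simp [U1curlFun]

theorem grad3_zero (p : ℝ × ℝ × ℝ) : grad3 0 p = 0 := by
  simp [grad3]

/-- The fields which admit a decomposition. -/
def Gd (k : ℕ) : Submodule ℝ (ℝ × ℝ × ℝ → ℝ × ℝ × ℝ) where
  carrier := {u | ∃ v ∈ Qsp ((k : ℤ) - 2) ((k : ℤ) - 2) ((k : ℤ) - 2) k,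
     ∃ p₁ p₂ : MvPolynomial (Fin 3) ℝ, ∃ ρ' : MvPolynomial (Fin 2) ℝ,
       U1curlBounds k p₁ p₂ ρ' ∧
       ∀ p ∈ PyrInfInt, u p = grad3 (bubQ v) p + U1curlFun k p₁ p₂ ρ' p}
  zero_mem' := ⟨0, zero_mem _, 0, 0, 0, U1curlBounds_zero k, fun p _ => by
    simp [bubQ_zero, grad3_zero, U1curlFun_zero]⟩
  add_mem' := by
    rintro u w ⟨v, hv, p₁, p₂, ρ, hb, he⟩ ⟨v', hv', p₁', p₂', ρ', hb', he'⟩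
    refine ⟨v + v', add_mem hv hv', p₁ + p₁', p₂ + p₂', ρ + ρ', U1curlBounds_add hb hb', ?_⟩
    intro p hp
    rw [bubQ_add, grad3_add _ _ _ (aux_diff hv p hp) (aux_diff hv' p hp), U1curlFun_add,
      Pi.add_apply, he p hp, he' p hp]
    abel
  smul_mem' := by
    rintro r u ⟨v, hv, p₁, p₂, ρ, hb, he⟩
    refine ⟨r • v, Submodule.smul_mem _ r hv, r • p₁, r • p₂, r • ρ, U1curlBounds_smul r hb, ?_⟩
    intro p hp
    rw [bubQ_smul, grad3_smul _ _ _ (aux_diff hv p hp), U1curlFun_smul,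
      Pi.smul_apply, he p hp, smul_add]

theorem Gd_congr {k : ℕ} {u w : ℝ × ℝ × ℝ → ℝ × ℝ × ℝ} (h : w ∈ Gd k)
    (e : ∀ p ∈ PyrInfInt, u p = w p) : u ∈ Gd k := by
  obtain ⟨v, hv, p₁, p₂, ρ, hb, he⟩ := h
  exact ⟨v, hv, p₁, p₂, ρ, hb, fun p hp => (e p hp).trans (he p hp)⟩

/-- First component injection. -/
def A1 : (ℝ × ℝ × ℝ → ℝ) →ₗ[ℝ] (ℝ × ℝ × ℝ → ℝ × ℝ × ℝ) where
  toFun q := fun p => (p.2.1 * (1 - p.2.1) * p.2.2 * q p, 0, 0)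
  map_add' q q' := by funext p; ext <;> simp; ring
  map_smul' r q := by funext p; ext <;> simp; ring

/-- Second component injection. -/
def A2 : (ℝ × ℝ × ℝ → ℝ) →ₗ[ℝ] (ℝ × ℝ × ℝ → ℝ × ℝ × ℝ) where
  toFun q := fun p => (0, p.1 * (1 - p.1) * p.2.2 * q p, 0)
  map_add' q q' := by funext p; ext <;> simp; ring
  map_smul' r q := by funext p; ext <;> simp; ring

/-- Third component injection. -/
def A3 : (ℝ × ℝ × ℝ → ℝ) →ₗ[ℝ] (ℝ × ℝ × ℝ → ℝ × ℝ × ℝ) where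
  toFun q := fun p => (0, 0, p.1 * (1 - p.1) * p.2.1 * (1 - p.2.1) * q p)
  map_add' q q' := by funext p; ext <;> simp; ring
  map_smul' r q := by funext p; ext <;> simp; ring

/-- The special field as a linear map. -/
def A4 (k : ℕ) : MvPolynomial (Fin 2) ℝ →ₗ[ℝ] (ℝ × ℝ × ℝ → ℝ × ℝ × ℝ) where
  toFun ρ := specialGrad k (bub2 ρ)
  map_add' q q' := by
    have : bub2 (q + q') = bub2 q + bub2 q' := by simp only [bub2]; ring
    rw [this]
    funext p; ext <;> simp [specialGrad] <;> ring
  map_smul' r q := by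
    have : bub2 (r • q) = r • bub2 q := by simp only [bub2, mul_smul_comm]
    rw [this]
    funext p; ext <;> simp [specialGrad, MvPolynomial.smul_eval] <;> ring

theorem A1_mem (k a b c : ℕ) (ha : (a : ℤ) ≤ k - 1) (hb : (b : ℤ) ≤ k - 2)
    (hc : (c : ℤ) ≤ k - 2) : A1 (qmon (k + 1) a b c) ∈ Gd k := by
  classical
  refine ⟨0, zero_mem _, MvPolynomial.monomial
    (Finsupp.single 0 a + Finsupp.single 1 b + Finsupp.single 2 c) 1, 0, 0, ⟨?_, by simp, by simp⟩, ?_⟩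
  · intro d hd
    have := Finset.mem_singleton.mp (MvPolynomial.support_monomial_subset hd)
    subst this
    simp [ha, hb, hc]
  · intro p hp
    rw [bubQ_zero, grad3_zero, zero_add]
    ext <;> simp [A1, U1curlFun, qmon, MvPolynomial.eval_monomial, Finsupp.prod_fintype,
      Fin.prod_univ_three]
    ring

theorem A2_mem (k a b c : ℕ) (ha : (a : ℤ) ≤ k - 2) (hb : (b : ℤ) ≤ k - 1)
    (hc : (c : ℤ) ≤ k - 2) : A2 (qmon (k + 1) a b c) ∈ Gd k := by
  classical
  refine ⟨0, zero_mem _, 0, MvPolynomial.monomial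
    (Finsupp.single 0 a + Finsupp.single 1 b + Finsupp.single 2 c) 1, 0, ⟨by simp, ?_, by simp⟩, ?_⟩
  · intro d hd
    have := Finset.mem_singleton.mp (MvPolynomial.support_monomial_subset hd)
    subst this
    simp [ha, hb, hc]
  · intro p hp
    rw [bubQ_zero, grad3_zero, zero_add]
    ext <;> simp [A2, U1curlFun, qmon, MvPolynomial.eval_monomial, Finsupp.prod_fintype,
      Fin.prod_univ_three]
    ring

theorem A3_mem_zero (k a b : ℕ) (ha : (a : ℤ) ≤ k - 2) (hb : (b : ℤ) ≤ k - 2) :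
    A3 (qmon (k + 1) a b 0) ∈ Gd k := by
  classical
  refine ⟨0, zero_mem _, 0, 0, MvPolynomial.monomial
    (Finsupp.single 0 a + Finsupp.single 1 b) 1, ⟨by simp, by simp, ?_⟩, ?_⟩
  · intro d hd
    have := Finset.mem_singleton.mp (MvPolynomial.support_monomial_subset hd)
    subst this
    simp [ha, hb]
  · intro p hp
    rw [bubQ_zero, grad3_zero, zero_add]
    ext <;> simp [A3, U1curlFun, qmon, MvPolynomial.eval_monomial, Finsupp.prod_fintype,
      Fin.prod_univ_two]
    ring

theorem grad_mem (k a b c : ℕ) (ha : (a : ℤ) ≤ k - 2) (hb : (b : ℤ) ≤ k - 2)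
    (hc : (c : ℤ) ≤ k - 2) : grad3 (bubQ (qmon k a b c)) ∈ Gd k :=
  ⟨qmon k a b c, Submodule.subset_span ⟨a, b, c, ha, hb, hc, rfl⟩, 0, 0, 0,
    U1curlBounds_zero k, fun p _ => by rw [U1curlFun_zero, add_zero]⟩

theorem A3_mem (k a b c : ℕ) (ha : (a : ℤ) ≤ k - 2) (hb : (b : ℤ) ≤ k - 2)
    (hc : (c : ℤ) ≤ k - 2) : A3 (qmon (k + 1) a b c) ∈ Gd k := by
  induction c with
  | zero => exact A3_mem_zero k a b ha hb
  | succ c ih =>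
    push_cast at hc
    have ih := ih (by omega)
    have hne : ((c : ℝ) + 1 - k) ≠ 0 := by
      have h : ((c : ℤ) + 1 : ℤ) < k := by omega
      have h : ((c : ℝ) + 1) < k := by exact_mod_cast h
      linarith
    have g := grad_mem k a b c ha hb (by omega)
    have m1 := A1_mem k a b c (by omega) hb (by omega)
    have m2 := A1_mem k a b (c + 1) (by omega) hb (by push_cast; omega)
    have m3 := A1_mem k (a + 1) b c (by push_cast; omega) hb (by omega)
    have m4 := A1_mem k (a + 1) b (c + 1) (by push_cast; omega) hb (by push_cast; omega)
    have n1 := A2_mem k a b c ha (by omega) (by omega)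
    have n2 := A2_mem k a b (c + 1) ha (by omega) (by push_cast; omega)
    have n3 := A2_mem k a (b + 1) c ha (by push_cast; omega) (by omega)
    have n4 := A2_mem k a (b + 1) (c + 1) ha (by push_cast; omega) (by push_cast; omega)
    have M1 := Submodule.smul_mem _ ((a : ℝ) + 1) (add_mem m1 m2)
    have M2 := Submodule.smul_mem _ ((a : ℝ) + 2) (add_mem m3 m4)
    have N1 := Submodule.smul_mem _ ((b : ℝ) + 1) (add_mem n1 n2)
    have N2 := Submodule.smul_mem _ ((b : ℝ) + 2) (add_mem n3 n4)
    have T := Submodule.smul_mem _ ((c : ℝ) + 1) ih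
    refine Gd_congr (Submodule.smul_mem _ ((c : ℝ) + 1 - k)⁻¹
      (sub_mem (sub_mem (sub_mem g (sub_mem M1 M2)) (sub_mem N1 N2)) T)) ?_
    intro p hp
    have hz : (1 + p.2.2) ≠ 0 := by have := hp.2.2.2.2; positivity
    simp only [Pi.smul_apply, Pi.sub_apply, Pi.add_apply, (aux_bub_mon k a b c p hp).2]
    ext
    · simp [A1, A2, A3, qmon]
      right
      field_simp
      ring
    · simp [A1, A2, A3, qmon]
      right
      field_simp
      ring
    · simp [A1, A2, A3, qmon]
      field_simp
      ring

theorem A4_mem_aux (c a b : ℕ) (ha : a ≤ c) (hb : b ≤ c) :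
    A4 (c + 2) (MvPolynomial.X 0 ^ a * MvPolynomial.X 1 ^ b) ∈ Gd (c + 2) := by
  have g := grad_mem (c + 2) a b c (by push_cast; omega) (by push_cast; omega) (by push_cast; omega)
  have m1 := A1_mem (c + 2) a b c (by push_cast; omega) (by push_cast; omega) (by push_cast; omega)
  have m3 := A1_mem (c + 2) (a + 1) b c (by push_cast; omega) (by push_cast; omega)
    (by push_cast; omega)
  have n1 := A2_mem (c + 2) a b c (by push_cast; omega) (by push_cast; omega) (by push_cast; omega)
  have n3 := A2_mem (c + 2) a (b + 1) c (by push_cast; omega) (by push_cast; omega)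
    (by push_cast; omega)
  have t := A3_mem (c + 2) a b c (by push_cast; omega) (by push_cast; omega) (by push_cast; omega)
  have M1 := Submodule.smul_mem _ ((a : ℝ) + 1) m1
  have M2 := Submodule.smul_mem _ ((a : ℝ) + 2) m3
  have N1 := Submodule.smul_mem _ ((b : ℝ) + 1) n1
  have N2 := Submodule.smul_mem _ ((b : ℝ) + 2) n3
  have T := Submodule.smul_mem _ ((c : ℝ) + 1) t
  refine Gd_congr (sub_mem (sub_mem (sub_mem g (sub_mem M1 M2)) (sub_mem N1 N2)) T) ?_
  intro p hp
  have hz : (1 + p.2.2) ≠ 0 := by have := hp.2.2.2.2; positivity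
  simp only [Pi.smul_apply, Pi.sub_apply, (aux_bub_mon (c + 2) a b c p hp).2]
  have e : bub2 (MvPolynomial.X 0 ^ a * MvPolynomial.X 1 ^ b) =
      (MvPolynomial.X 0 ^ (a + 1) - MvPolynomial.X 0 ^ (a + 2)) *
      (MvPolynomial.X 1 ^ (b + 1) - MvPolynomial.X 1 ^ (b + 2)) := by
    simp only [bub2]; ring
  ext
  · simp [A1, A2, A3, A4, qmon, specialGrad, e, Derivation.leibniz, Derivation.leibniz_pow,
      MvPolynomial.pderiv_X]
    field_simp
    ring
  · simp [A1, A2, A3, A4, qmon, specialGrad, e, Derivation.leibniz, Derivation.leibniz_pow,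
      MvPolynomial.pderiv_X]
    field_simp
    ring
  · simp [A1, A2, A3, A4, qmon, specialGrad, e]
    field_simp
    ring

theorem A4_mem (k : ℕ) (ρ : MvPolynomial (Fin 2) ℝ)
    (hρ : ∀ d ∈ ρ.support, (d 0 : ℤ) ≤ (k : ℤ) - 2 ∧ (d 1 : ℤ) ≤ (k : ℤ) - 2) :
    A4 k ρ ∈ Gd k := by
  rw [ρ.as_sum, map_sum]
  refine Submodule.sum_mem _ fun d hd => ?_
  obtain ⟨h0, h1⟩ := hρ d hd
  obtain ⟨c, rfl⟩ : ∃ c, k = c + 2 := ⟨k - 2, by omega⟩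
  have e : MvPolynomial.monomial d (ρ.coeff d) =
      ρ.coeff d • (MvPolynomial.X 0 ^ (d 0) * MvPolynomial.X 1 ^ (d 1)) := by
    rw [MvPolynomial.monomial_eq, Finsupp.prod_fintype _ _ (by simp), Fin.prod_univ_two,
      MvPolynomial.smul_eq_C_mul]
  rw [e, map_smul]
  exact Submodule.smul_mem _ _ (A4_mem_aux c _ _ (by omega) (by omega))

theorem aux_repr (k : ℕ) {v : ℝ × ℝ × ℝ → ℝ}
    (hv : v ∈ Qsp ((k : ℤ) - 2) ((k : ℤ) - 2) ((k : ℤ) - 2) k) (x y : ℝ) :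
    ∃ P ∈ Polynomial.degreeLT ℝ (k - 1), ∀ z, v (x, y, z) = P.eval z / (1 + z) ^ k := by
  unfold Qsp at hv
  induction hv using Submodule.span_induction with
  | mem f h =>
    obtain ⟨a, b, c, -, -, hc, rfl⟩ := h
    refine ⟨Polynomial.C (x ^ a * y ^ b) * Polynomial.X ^ c, ?_, fun z => by simp [qmon]⟩
    rw [Polynomial.mem_degreeLT]
    refine (Polynomial.degree_C_mul_X_pow_le _ _).trans_lt ?_
    have : c < k - 1 := by omega
    exact_mod_cast this
  | zero => exact ⟨0, zero_mem _, by simp⟩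
  | add f g _ _ hf hg =>
    obtain ⟨P, hP, h⟩ := hf
    obtain ⟨Q, hQ, h'⟩ := hg
    exact ⟨P + Q, add_mem hP hQ, fun z => by simp [h, h', add_div]⟩
  | smul r f _ hf =>
    obtain ⟨P, hP, h⟩ := hf
    exact ⟨r • P, Submodule.smul_mem _ r hP, fun z => by simp [h, mul_div_assoc]⟩

theorem aux_poly (k : ℕ) (hk : 1 ≤ k) (P : Polynomial ℝ) (hP : P ∈ Polynomial.degreeLT ℝ (k - 1))
    (C : ℝ) (h : ∀ z : ℝ, 0 < z →
      (Polynomial.derivative (Polynomial.X * P)).eval z * (1 + z) - k * (z * P.eval z) = C) :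
    P = 0 := by
  have hk0 : (k : ℝ) ≠ 0 := by positivity
  set M : Polynomial ℝ := Polynomial.X * P + Polynomial.C (C / k) with hM
  have e : Polynomial.derivative M * (1 + Polynomial.X) = (k : Polynomial ℝ) * M := by
    apply Polynomial.eq_of_infinite_eval_eq
    refine (Set.Ioi_infinite (0 : ℝ)).mono fun z hz => ?_
    have := h z hz
    simp [hM] at this ⊢
    field_simp
    linarith
  have hdeg : M.natDegree < k := by
    by_cases h0 : P = 0
    · simp [hM, h0]; omega
    · have h1 := Polynomial.mem_degreeLT.mp hP
      rw [Polynomial.degree_eq_natDegree h0] at h1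
      have h1 : P.natDegree < k - 1 := by exact_mod_cast h1
      have : M.natDegree ≤ P.natDegree + 1 := by
        rw [hM]
        refine (Polynomial.natDegree_add_le _ _).trans ?_
        simp [Polynomial.natDegree_X_mul h0]
      omega
  have hM0 : M = 0 := by
    by_contra hne
    have hc := congrArg (fun q => Polynomial.coeff q M.natDegree) e
    have hlc : M.coeff M.natDegree ≠ 0 := by
      rw [Polynomial.coeff_natDegree]; exact Polynomial.leadingCoeff_ne_zero.mpr hne
    have htop : M.coeff (M.natDegree + 1) = 0 :=
      Polynomial.coeff_eq_zero_of_natDegree_lt (Nat.lt_succ_self _)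
    have hlt : (M.natDegree : ℝ) < k := by exact_mod_cast hdeg
    have hr : ((k : Polynomial ℝ) * M).coeff M.natDegree = k * M.coeff M.natDegree := by
      rw [← Polynomial.C_eq_natCast, Polynomial.coeff_C_mul]
    have hl : (Polynomial.derivative M * (1 + Polynomial.X)).coeff M.natDegree =
        M.natDegree * M.coeff M.natDegree := by
      generalize M.natDegree = n at htop ⊢
      rw [mul_add, mul_one, Polynomial.coeff_add, Polynomial.coeff_derivative, htop]
      cases n with
      | zero => simp
      | succ n => rw [Polynomial.coeff_mul_X, Polynomial.coeff_derivative]; push_cast; ring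
    replace hc := hl.symm.trans (hc.trans hr)
    exact hlt.ne (mul_right_cancel₀ hlc hc)
  have hC : C / k = 0 := by
    have := congrArg (Polynomial.eval 0) hM0
    simpa [hM] using this
  rw [hM, hC] at hM0
  simpa using hM0

theorem aux_unique (k : ℕ) (hk : 1 ≤ k) {v : ℝ × ℝ × ℝ → ℝ}
    (hv : v ∈ Qsp ((k : ℤ) - 2) ((k : ℤ) - 2) ((k : ℤ) - 2) k) (E : ℝ → ℝ → ℝ)
    (h : ∀ p ∈ PyrInfInt, (grad3 (bubQ v) p).2.2 =
      p.1 * (1 - p.1) * p.2.1 * (1 - p.2.1) * E p.1 p.2.1 / (1 + p.2.2) ^ (k + 1))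
    (p : ℝ × ℝ × ℝ) (hp : p ∈ PyrInfInt) : bubQ v p = 0 := by
  obtain ⟨x, y, z⟩ := p
  obtain ⟨P, hP, hr⟩ := aux_repr k hv x y
  have hx : x ≠ 0 := hp.1.ne'
  have hx1 : 1 - x ≠ 0 := by have := hp.2.1; simp at this; linarith
  have hy : y ≠ 0 := hp.2.2.1.ne'
  have hy1 : 1 - y ≠ 0 := by have := hp.2.2.2.1; simp at this; linarith
  have hP0 : P = 0 := by
    refine aux_poly k hk P hP (E x y) fun t ht => ?_
    have hpt : (x, y, t) ∈ PyrInfInt := ⟨hp.1, hp.2.1, hp.2.2.1, hp.2.2.2.1, ht⟩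
    have h1 := (aux_diff hv _ hpt).hasFDerivAt
    have hcurve : HasDerivAt (fun s : ℝ => (x, y, s)) ((0 : ℝ), (0 : ℝ), (1 : ℝ)) t :=
      (hasDerivAt_const t x).prodMk ((hasDerivAt_const t y).prodMk (hasDerivAt_id t))
    have h2 := h1.comp_hasDerivAt t hcurve
    have ht1 : (1 + t) ≠ 0 := by positivity
    have h3 := ((((Polynomial.X * P).hasDerivAt t).div
      (((hasDerivAt_id t).const_add 1).pow k) (pow_ne_zero k ht1))).const_mul
        (x * (1 - x) * y * (1 - y))
    have h4 := h2.unique (h3.congr_of_eventuallyEq (Filter.Eventually.of_forall fun s => by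
      simp [bubQ, hr]; ring))
    have h5 := h _ hpt
    simp only [grad3] at h5
    rw [h5] at h4
    obtain ⟨j, rfl⟩ : ∃ j, k = j + 1 := ⟨k - 1, by omega⟩
    simp at h4 ⊢
    field_simp at h4
    refine mul_left_cancel₀ (pow_ne_zero (2 * j + 2) ht1) ?_
    linear_combination -h4
  simp [bubQ, hr, hP0]

theorem PyrInfInt_open : IsOpen PyrInfInt := by
  have : PyrInfInt = {p : ℝ × ℝ × ℝ | 0 < p.1} ∩ ({p | p.1 < 1} ∩ ({p | 0 < p.2.1} ∩
      ({p | p.2.1 < 1} ∩ {p | 0 < p.2.2}))) := by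
    ext p; simp [PyrInfInt]
  rw [this]
  refine IsOpen.inter ?_ (IsOpen.inter ?_ (IsOpen.inter ?_ (IsOpen.inter ?_ ?_))) <;>
    exact isOpen_lt (by fun_prop) (by fun_prop)

/-- every `u ∈ U^{(1),k}_0(Ω∞)` can be written, uniquely, as `u = ∇q + w`
on `Ω∞°` with `q = x(1−x)y(1−y)z·v ∈ U^{(0),k}_0(Ω∞)` (`v ∈ Q^{k−2,k−2,k−2}_k`) and
`w ∈ U^{(1),k}_{0,curl}(Ω∞)`. -/
theorem U1zero_helmholtz_decomposition (k : ℕ) (hk : 1 ≤ k)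
    (q₁ q₂ q₃ : (ℝ × ℝ × ℝ) → ℝ)
    (hq₁ : q₁ ∈ Qsp ((k : ℤ) - 1) ((k : ℤ) - 2) ((k : ℤ) - 2) (k + 1))
    (hq₂ : q₂ ∈ Qsp ((k : ℤ) - 2) ((k : ℤ) - 1) ((k : ℤ) - 2) (k + 1))
    (hq₃ : q₃ ∈ Qsp ((k : ℤ) - 2) ((k : ℤ) - 2) ((k : ℤ) - 2) (k + 1))
    (ρ : MvPolynomial (Fin 2) ℝ)
    (hρ : ∀ d ∈ ρ.support, (d 0 : ℤ) ≤ (k : ℤ) - 2 ∧ (d 1 : ℤ) ≤ (k : ℤ) - 2) :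
    (∃ v ∈ Qsp ((k : ℤ) - 2) ((k : ℤ) - 2) ((k : ℤ) - 2) k,
     ∃ p₁ p₂ : MvPolynomial (Fin 3) ℝ, ∃ ρ' : MvPolynomial (Fin 2) ℝ,
       U1curlBounds k p₁ p₂ ρ' ∧
       ∀ p ∈ PyrInfInt,
         U1zeroFun k q₁ q₂ q₃ ρ p = grad3 (bubQ v) p + U1curlFun k p₁ p₂ ρ' p) ∧
    (∀ v ∈ Qsp ((k : ℤ) - 2) ((k : ℤ) - 2) ((k : ℤ) - 2) k,
     ∀ v' ∈ Qsp ((k : ℤ) - 2) ((k : ℤ) - 2) ((k : ℤ) - 2) k,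
     ∀ p₁ p₂ p₁' p₂' : MvPolynomial (Fin 3) ℝ, ∀ ρ' ρ'' : MvPolynomial (Fin 2) ℝ,
       U1curlBounds k p₁ p₂ ρ' → U1curlBounds k p₁' p₂' ρ'' →
       (∀ p ∈ PyrInfInt,
         U1zeroFun k q₁ q₂ q₃ ρ p = grad3 (bubQ v) p + U1curlFun k p₁ p₂ ρ' p) →
       (∀ p ∈ PyrInfInt,
         U1zeroFun k q₁ q₂ q₃ ρ p = grad3 (bubQ v') p + U1curlFun k p₁' p₂' ρ'' p) →
       ∀ p ∈ PyrInfInt,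
         bubQ v p = bubQ v' p ∧ U1curlFun k p₁ p₂ ρ' p = U1curlFun k p₁' p₂' ρ'' p) := by
  constructor
  · have e : U1zeroFun k q₁ q₂ q₃ ρ = A1 q₁ + A2 q₂ + A3 q₃ + A4 k ρ := by
      funext p
      ext <;> simp [U1zeroFun, A1, A2, A3, A4]
    have h1 : A1 q₁ ∈ Gd k := by
      refine (Submodule.span_le (p := (Gd k).comap A1)).mpr ?_ hq₁
      rintro _ ⟨a, b, c, ha, hb, hc, rfl⟩
      exact A1_mem k a b c ha hb hc
    have h2 : A2 q₂ ∈ Gd k := by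
      refine (Submodule.span_le (p := (Gd k).comap A2)).mpr ?_ hq₂
      rintro _ ⟨a, b, c, ha, hb, hc, rfl⟩
      exact A2_mem k a b c ha hb hc
    have h3 : A3 q₃ ∈ Gd k := by
      refine (Submodule.span_le (p := (Gd k).comap A3)).mpr ?_ hq₃
      rintro _ ⟨a, b, c, ha, hb, hc, rfl⟩
      exact A3_mem k a b c ha hb hc
    have h : U1zeroFun k q₁ q₂ q₃ ρ ∈ Gd k := by
      rw [e]
      exact add_mem (add_mem (add_mem h1 h2) h3) (A4_mem k ρ hρ)
    exact h
  · intro v hv v' hv' p₁ p₂ p₁' p₂' ρ' ρ'' _ _ h h'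
    have key : ∀ p ∈ PyrInfInt, bubQ v p = bubQ v' p := by
      intro p hp
      have hs : v + (-1 : ℝ) • v' ∈ Qsp ((k : ℤ) - 2) ((k : ℤ) - 2) ((k : ℤ) - 2) k :=
        add_mem hv (Submodule.smul_mem _ _ hv')
      have := aux_unique k hk hs
        (fun x y => MvPolynomial.eval ![x, y] ρ'' - MvPolynomial.eval ![x, y] ρ') (by
          intro q hq
          rw [bubQ_add, bubQ_smul, grad3_add _ _ _ (aux_diff hv q hq)
            ((aux_diff hv' q hq).const_smul _), grad3_smul _ _ _ (aux_diff hv' q hq)]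
          have e := congrArg (fun t : ℝ × ℝ × ℝ => t.2.2) ((h q hq).symm.trans (h' q hq))
          simp [U1curlFun] at e
          simp
          rw [mul_sub, sub_div]
          linarith) p hp
      rw [bubQ_add, bubQ_smul] at this
      simp at this
      linarith
    intro p hp
    refine ⟨key p hp, ?_⟩
    have hg : grad3 (bubQ v) p = grad3 (bubQ v') p := by
      have : bubQ v =ᶠ[nhds p] bubQ v' :=
        Filter.eventually_of_mem (PyrInfInt_open.mem_nhds hp) key
      simp only [grad3, this.fderiv_eq]
    have e := (h p hp).symm.trans (h' p hp)
    rw [hg] at e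
    exact add_left_cancel e

end
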